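/- Let μ ≥ 0 and λ ≥ 1 be real, assume M₃ ≠ 0 and Θ ≠ 0, let f belong to the class S*_{Σ,q}^η(μ,λ;φ), and let ϱ ∈ ℝ. Then a₃ − ϱ·a₂² = E₁·[ (2(1−ϱ)·E₁²·(λ[3]_q − 1)·M₃·L₃ + Θ)·c₂ + (2(1−ϱ)·E₁²·(λ[3]_q − 1)·M₃·L₃ − Θ)·d₂ ] / (4(λ[3]_q − 1)·M₃·L₃·Θ). -/

import Mathlib

open Complex Metric Set

noncomputable def symQ (q x : ℝ) : ℝ := (Real.rpow q x - Real.rpow q (-x)) / (q - q⁻¹)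

noncomputable def Dq (q : ℝ) (f : ℂ → ℂ) (z : ℂ) : ℂ :=
  if z = 0 then deriv f 0
  else (f ((q : ℂ) * z) - f (z / (q : ℂ))) / (((q : ℂ) - (q : ℂ)⁻¹) * z)

def IsSchwarz (u : ℂ → ℂ) : Prop :=
  AnalyticOnNhd ℂ u (ball 0 1) ∧ u 0 = 0 ∧ ∀ z ∈ ball (0 : ℂ) 1, u z ∈ ball (0 : ℂ) 1

noncomputable def taylorCoeff (h : ℂ → ℂ) (n : ℕ) : ℂ := iteratedDeriv n h 0 / (n.factorial : ℂ)

noncomputable def Lcoef (q η : ℝ) (n : ℕ) : ℝ := symQ q (1 + η) / symQ q ((n : ℝ) + η)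

noncomputable def Jop (q η : ℝ) (h : ℂ → ℂ) (z : ℂ) : ℂ :=
  ∑' n, (Lcoef q η n : ℂ) * taylorCoeff h n * z ^ n

noncomputable def Phi (q η lam mu : ℝ) (h : ℂ → ℂ) (z : ℂ) : ℂ :=
  (2 * z * Dq q (Jop q η h) z ^ (lam : ℂ) / (Jop q η h z - Jop q η h (-z))) ^ (mu : ℂ) *
    (2 * Dq q (fun ζ => ζ * Dq q (Jop q η h) ζ) z ^ (lam : ℂ) /
        Dq q (fun ζ => Jop q η h ζ - Jop q η h (-ζ)) z) ^ ((1 - mu : ℝ) : ℂ)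

noncomputable def M2v (q mu : ℝ) : ℝ := mu - (mu - 1) * symQ q 2
noncomputable def M3v (q mu : ℝ) : ℝ := mu - (mu - 1) * symQ q 3
noncomputable def N2v (q mu : ℝ) : ℝ := mu - (mu - 1) * symQ q 2 ^ 2

noncomputable def Omegav (q η lam mu : ℝ) : ℝ :=
  2 * (lam * symQ q 3 - 1) * M3v q mu * Lcoef q η 3 +
    lam * (lam * M2v q mu ^ 2 - N2v q mu) * symQ q 2 ^ 2 * Lcoef q η 2 ^ 2

noncomputable def Thetav (q η lam mu E1 : ℝ) (E : ℕ → ℂ) : ℂ :=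
  ((2 * (lam * symQ q 3 - 1) * M3v q mu * E1 ^ 2 * Lcoef q η 3 : ℝ) : ℂ) +
    (lam : ℂ) * (((lam * M2v q mu ^ 2 : ℝ) : ℂ) * (((E1 ^ 2 + 2 * E1 : ℝ) : ℂ) - 2 * E 2) -
        ((N2v q mu * E1 ^ 2 : ℝ) : ℂ)) * ((symQ q 2 ^ 2 * Lcoef q η 2 ^ 2 : ℝ) : ℂ)

noncomputable def Gammav (q η lam : ℝ) : ℝ :=
  2 * (lam * symQ q 3 - 1) * Lcoef q η 3 + lam * (lam - 1) * symQ q 2 ^ 2 * Lcoef q η 2 ^ 2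

noncomputable def Xiv (q η lam E1 : ℝ) (E : ℕ → ℂ) : ℂ :=
  ((2 * (lam * symQ q 3 - 1) * E1 ^ 2 * Lcoef q η 3 : ℝ) : ℂ) +
    (lam : ℂ) * ((((lam - 1) * E1 ^ 2 : ℝ) : ℂ) + 2 * (lam : ℂ) * ((E1 : ℂ) - E 2)) *
      ((symQ q 2 ^ 2 * Lcoef q η 2 ^ 2 : ℝ) : ℂ)

noncomputable def Psiv (q η lam : ℝ) : ℝ :=
  2 * (lam * symQ q 3 - 1) * symQ q 3 * Lcoef q η 3 +
    lam * (lam - 1) * symQ q 2 ^ 4 * Lcoef q η 2 ^ 2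

noncomputable def Upsv (q η lam E1 : ℝ) (E : ℕ → ℂ) : ℂ :=
  ((2 * (lam * symQ q 3 - 1) * symQ q 3 * E1 ^ 2 * Lcoef q η 3 : ℝ) : ℂ) +
    (lam : ℂ) * ((((lam - 1) * E1 ^ 2 : ℝ) : ℂ) + 2 * (lam : ℂ) * ((E1 : ℂ) - E 2)) *
      ((symQ q 2 ^ 4 * Lcoef q η 2 ^ 2 : ℝ) : ℂ)

open Filter Topology

/-- second order expansion at 0 -/
def T2 (F : ℂ → ℂ) (a b c : ℂ) : Prop :=
  ∃ r : ℂ → ℂ, Tendsto r (𝓝[≠] 0) (𝓝 c) ∧ ∀ᶠ z in 𝓝[≠] (0 : ℂ), F z = a + b * z + z ^ 2 * r z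

def X2 (G : ℂ → ℂ) (a p0 p1 p2 : ℂ) : Prop :=
  ∃ s : ℂ → ℂ, Tendsto s (𝓝 a) (𝓝 p2) ∧
    ∀ᶠ w in 𝓝 a, G w = p0 + p1 * (w - a) + (w - a) ^ 2 * s w

lemma tid : Tendsto (fun z : ℂ => z) (𝓝[≠] 0) (𝓝 0) := tendsto_nhdsWithin_of_tendsto_nhds tendsto_id

lemma nz : ∀ᶠ z in 𝓝[≠] (0 : ℂ), z ≠ 0 := eventually_mem_nhdsWithin

lemma T2.tendsto {F a b c} (h : T2 F a b c) : Tendsto F (𝓝[≠] 0) (𝓝 a) := by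
  obtain ⟨r, hr, he⟩ := h
  have : Tendsto (fun z : ℂ => a + b * z + z ^ 2 * r z) (𝓝[≠] 0) (𝓝 (a + b * 0 + 0 ^ 2 * c)) :=
    (tendsto_const_nhds.add (tendsto_const_nhds.mul tid)).add ((tid.pow 2).mul hr)
  simp only [mul_zero, add_zero, ne_eq, OfNat.ofNat_ne_zero, not_false_eq_true, zero_pow,
    zero_mul] at this
  exact this.congr' (he.mono fun z hz => hz.symm)

lemma T2.congr {F G a b c} (h : T2 F a b c) (e : ∀ᶠ z in 𝓝[≠] (0 : ℂ), G z = F z) :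
    T2 G a b c := by
  obtain ⟨r, hr, he⟩ := h
  exact ⟨r, hr, by filter_upwards [he, e] with z h1 h2; rw [h2, h1]⟩

lemma T2.cast {F a b c a' b' c'} (h : T2 F a b c) (ha : a = a') (hb : b = b') (hc : c = c') :
    T2 F a' b' c' := by subst ha hb hc; exact h

lemma T2.const (a : ℂ) : T2 (fun _ => a) a 0 0 :=
  ⟨fun _ => 0, tendsto_const_nhds, by simp⟩

lemma T2.add {F G a b c a' b' c'} (h : T2 F a b c) (h' : T2 G a' b' c') :
    T2 (fun z => F z + G z) (a + a') (b + b') (c + c') := by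
  obtain ⟨r, hr, he⟩ := h
  obtain ⟨s, hs, he'⟩ := h'
  refine ⟨fun z => r z + s z, hr.add hs, ?_⟩
  filter_upwards [he, he'] with z h1 h2
  rw [h1, h2]; ring

lemma T2.mul {F G a b c a' b' c'} (h : T2 F a b c) (h' : T2 G a' b' c') :
    T2 (fun z => F z * G z) (a * a') (a * b' + b * a') (a * c' + b * b' + c * a') := by
  obtain ⟨r, hr, he⟩ := h
  obtain ⟨s, hs, he'⟩ := h'
  refine ⟨fun z => a * s z + b * b' + r z * a' + z * (b * s z + r z * b') + z ^ 2 * (r z * s z), ?_, ?_⟩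
  · have := (((tendsto_const_nhds (x := a)).mul hs).add (tendsto_const_nhds (x := b * b'))).add
      (hr.mul (tendsto_const_nhds (x := a')))
    have h2 := tid.mul (((tendsto_const_nhds (x := b)).mul hs).add (hr.mul (tendsto_const_nhds (x := b'))))
    have h3 := (tid.pow 2).mul (hr.mul hs)
    have := (this.add h2).add h3
    simpa using this
  filter_upwards [he, he'] with z h1 h2
  rw [h1, h2]; ring

lemma T2.smul {F a b c} (k : ℂ) (h : T2 F a b c) : T2 (fun z => k * F z) (k * a) (k * b) (k * c) :=
  ((T2.const k).mul h).cast rfl (by ring) (by ring)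

lemma T2.scale {F a b c} (k : ℂ) (hk : k ≠ 0) (h : T2 F a b c) :
    T2 (fun z => F (k * z)) a (k * b) (k ^ 2 * c) := by
  obtain ⟨r, hr, he⟩ := h
  have ht : Tendsto (fun z : ℂ => k * z) (𝓝[≠] 0) (𝓝[≠] 0) := by
    refine tendsto_nhdsWithin_iff.2 ⟨by simpa using (tendsto_const_nhds (x := k)).mul tid, ?_⟩
    filter_upwards [nz] with z hz
    simp [hk, hz]
  refine ⟨fun z => k ^ 2 * r (k * z), tendsto_const_nhds.mul (hr.comp ht), ?_⟩
  filter_upwards [ht.eventually he] with z hz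
  rw [hz]; ring

lemma T2.unique {F a b c a' b' c'} (h : T2 F a b c) (h' : T2 F a' b' c') :
    a = a' ∧ b = b' ∧ c = c' := by
  have ha : a = a' := tendsto_nhds_unique h.tendsto h'.tendsto
  subst ha
  obtain ⟨r, hr, he⟩ := h
  obtain ⟨s, hs, he'⟩ := h'
  have h1 : Tendsto (fun z : ℂ => b + z * r z) (𝓝[≠] 0) (𝓝 b) := by
    simpa using (tendsto_const_nhds (x := b)).add (tid.mul hr)
  have h2 : Tendsto (fun z : ℂ => b' + z * s z) (𝓝[≠] 0) (𝓝 b') := by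
    simpa using (tendsto_const_nhds (x := b')).add (tid.mul hs)
  have hb : b = b' := by
    refine tendsto_nhds_unique h1 (h2.congr' ?_)
    filter_upwards [he, he', nz] with z e1 e2 hz
    rw [e1] at e2
    apply mul_left_cancel₀ hz
    linear_combination -e2
  subst hb
  refine ⟨rfl, rfl, tendsto_nhds_unique hr (hs.congr' ?_)⟩
  filter_upwards [he, he', nz] with z e1 e2 hz
  rw [e1] at e2
  apply mul_left_cancel₀ (pow_ne_zero 2 hz)
  linear_combination -e2

lemma X2.comp {F G a b c p0 p1 p2} (hG : X2 G a p0 p1 p2) (hF : T2 F a b c) :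
    T2 (fun z => G (F z)) p0 (p1 * b) (p1 * c + p2 * b ^ 2) := by
  have ht := hF.tendsto
  obtain ⟨r, hr, he⟩ := hF
  obtain ⟨s, hs, he'⟩ := hG
  refine ⟨fun z => p1 * r z + s (F z) * (b + z * r z) ^ 2, ?_, ?_⟩
  · have := ((tendsto_const_nhds (x := p1)).mul hr).add
      ((hs.comp ht).mul (((tendsto_const_nhds (x := b)).add (tid.mul hr)).pow 2))
    simpa using this
  filter_upwards [he, ht.eventually he'] with z h1 h2
  rw [h2]
  have : F z - a = b * z + z ^ 2 * r z := by rw [h1]; ring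
  rw [this]; ring

lemma X2.T2 {F a b c} (h : X2 F 0 a b c) : T2 F a b c := by
  obtain ⟨s, hs, he⟩ := h
  refine ⟨s, tendsto_nhdsWithin_of_tendsto_nhds hs, ?_⟩
  filter_upwards [nhdsWithin_le_nhds he] with z hz
  simpa using hz

lemma HasFPowerSeriesAt.X2 {G : ℂ → ℂ} {p} {a : ℂ} (h : HasFPowerSeriesAt G p a) :
    X2 G a (p.coeff 0) (p.coeff 1) (p.coeff 2) := by
  have h1 := h.has_fpower_series_dslope_fslope
  have h2 := h1.has_fpower_series_dslope_fslope
  have e0 : p.coeff 0 = G a := h.coeff_zero 1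
  have e1 : p.coeff 1 = dslope G a a := by
    have := h1.coeff_zero 1
    rw [← this]; exact (FormalMultilinearSeries.coeff_fslope (p := p) (n := 0)).symm
  have e2 : p.coeff 2 = dslope (dslope G a) a a := by
    have := h2.coeff_zero 1
    rw [← this]
    have : p.fslope.fslope.coeff 0 = p.coeff 2 := by simp
    exact this.symm
  refine ⟨dslope (dslope G a) a, ?_, Eventually.of_forall fun w => ?_⟩
  · rw [e2]; exact h2.continuousAt
  · have i1 := sub_smul_dslope G a w
    have i2 := sub_smul_dslope (dslope G a) a w
    simp only [smul_eq_mul] at i1 i2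
    rw [e0, e1]
    linear_combination -i1 - (w - a) * i2

lemma HasFPowerSeriesAt.T2div {G : ℂ → ℂ} {p} (h : HasFPowerSeriesAt G p 0) (h0 : G 0 = 0) :
    _root_.X2 (dslope G 0) 0 (p.coeff 1) (p.coeff 2) (p.coeff 3) ∧
    T2 (fun z => G z / z) (p.coeff 1) (p.coeff 2) (p.coeff 3) := by
  have h1 := h.has_fpower_series_dslope_fslope.X2
  simp only [FormalMultilinearSeries.coeff_fslope, zero_add, Nat.reduceAdd] at h1
  refine ⟨h1, h1.T2.congr ?_⟩
  filter_upwards [nz] with z hz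
  have := sub_smul_dslope G 0 z
  simp only [smul_eq_mul, sub_zero, h0] at this
  rw [← this]; field_simp

lemma X2_inv : X2 (fun w => w⁻¹) 1 1 (-1) 1 := by
  refine ⟨fun w => w⁻¹, ?_, ?_⟩
  · have : ContinuousAt (fun w : ℂ => w⁻¹) 1 := continuousAt_inv₀ one_ne_zero
    simpa [ContinuousAt] using this
  · filter_upwards [isOpen_ne.mem_nhds (one_ne_zero (α := ℂ))] with w hw
    have : w ≠ 0 := hw
    field_simp; ring

lemma X2_cpow (k : ℂ) : X2 (fun w => w ^ k) 1 1 k (k * (k - 1) / 2) := by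
  have ha : AnalyticAt ℂ (fun w : ℂ => w ^ k) 1 :=
    analyticAt_id.cpow analyticAt_const (by simp)
  have hd : ∀ j : ℂ, deriv (fun w : ℂ => w ^ j) =ᶠ[𝓝 1] fun w => j * w ^ (j - 1) := by
    intro j
    filter_upwards [isOpen_slitPlane.mem_nhds (one_mem_slitPlane)] with w hw
    have := (hasDerivAt_id w).cpow_const (c := j) hw
    simpa using this.deriv
  have hd' : ∀ j : ℂ, DifferentiableAt ℂ (fun w : ℂ => w ^ j) 1 := fun j =>
    (differentiableAt_id).cpow_const (by simp)
  have h := ha.hasFPowerSeriesAt.X2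
  have e1 : deriv (fun w : ℂ => w ^ k) 1 = k := by rw [(hd k).self_of_nhds]; simp
  have e2 : iteratedDeriv 2 (fun w : ℂ => w ^ k) 1 = k * (k - 1) := by
    rw [iteratedDeriv_succ, iteratedDeriv_one, (hd k).deriv_eq, deriv_const_mul _ (hd' _),
      (hd _).self_of_nhds]; simp
  simp only [FormalMultilinearSeries.coeff_ofScalars, iteratedDeriv_one, iteratedDeriv_zero, e1, e2] at h
  simpa using h

lemma ps_of_bound {F : ℂ → ℂ} {a : ℕ → ℂ} {r C : ℝ} (hr : 0 < r) (hb : ∀ n, ‖a n‖ * r ^ n ≤ C)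
    (hF : ∀ᶠ z in 𝓝 (0 : ℂ), F z = ∑' n, a n * z ^ n) :
    HasFPowerSeriesAt F (FormalMultilinearSeries.ofScalars ℂ a) 0 := by
  set p := FormalMultilinearSeries.ofScalars ℂ a with hp
  have hrad : 0 < p.radius := by
    lift r to NNReal using hr.le
    have : (r : ENNReal) ≤ p.radius := by
      apply p.le_radius_of_bound C
      intro n
      rw [hp, FormalMultilinearSeries.ofScalars_norm]
      exact hb n
    refine lt_of_lt_of_le ?_ this
    exact_mod_cast hr
  have h := (p.hasFPowerSeriesOnBall hrad).hasFPowerSeriesAt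
  refine h.congr ?_
  filter_upwards [hF] with z hz
  rw [hz]
  have := congrFun (FormalMultilinearSeries.ofScalarsSum_eq_tsum (E := ℂ) a) z
  simp only [FormalMultilinearSeries.ofScalarsSum, smul_eq_mul] at this
  exact this

lemma ps_of_ne {F : ℂ → ℂ} {a : ℕ → ℂ}
    (hF : ∀ z ∈ ball (0 : ℂ) 1, F z = ∑' n, a n * z ^ n) (hne : F (1 / 2) ≠ 0) :
    HasFPowerSeriesAt F (FormalMultilinearSeries.ofScalars ℂ a) 0 := by
  have hs : Summable fun n => a n * (1 / 2 : ℂ) ^ n := by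
    by_contra hcon
    apply hne
    rw [hF _ (by simp; norm_num), tsum_eq_zero_of_not_summable hcon]
  obtain ⟨C, hC⟩ := hs.tendsto_atTop_zero.norm.bddAbove_range
  refine ps_of_bound (r := 1 / 2) (C := C) (by norm_num) (fun n => ?_) ?_
  · have := hC ⟨n, rfl⟩
    simpa using this
  · filter_upwards [ball_mem_nhds (0 : ℂ) one_pos] with z hz using hF z hz

lemma symQ_mono {q : ℝ} (hq0 : 0 < q) (hq1 : q < 1) {x y : ℝ} (hxy : x ≤ y) :
    symQ q x ≤ symQ q y := by
  unfold symQ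
  have h1 : Real.rpow q y ≤ Real.rpow q x := Real.rpow_le_rpow_of_exponent_ge hq0 hq1.le hxy
  have h2 : Real.rpow q (-x) ≤ Real.rpow q (-y) :=
    Real.rpow_le_rpow_of_exponent_ge hq0 hq1.le (by linarith)
  have h3 : q - q⁻¹ ≤ 0 := by
    have := (one_lt_inv₀ hq0).2 hq1
    linarith
  exact div_le_div_of_nonpos_of_le h3 (by linarith)

lemma qsub {q : ℝ} (hq0 : 0 < q) (hq1 : q < 1) : q - q⁻¹ < 0 := by
  have := (one_lt_inv₀ hq0).2 hq1
  linarith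

lemma symQ_pos {q : ℝ} (hq0 : 0 < q) (hq1 : q < 1) {x : ℝ} (hx : 0 < x) : 0 < symQ q x := by
  unfold symQ
  have h1 : Real.rpow q x < Real.rpow q (-x) :=
    Real.rpow_lt_rpow_of_exponent_gt hq0 hq1 (by linarith)
  exact div_pos_of_neg_of_neg (by linarith) (qsub hq0 hq1)

lemma symQ_nat {q : ℝ} (n : ℕ) (hq0 : 0 < q) :
    symQ q n = (q ^ n - (q⁻¹) ^ n) / (q - q⁻¹) := by
  unfold symQ
  have h1 : Real.rpow q n = q ^ n := Real.rpow_natCast q n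
  have h2 : Real.rpow q (-(n : ℝ)) = (q⁻¹) ^ n := by
    have := Real.rpow_neg hq0.le (n : ℝ)
    rw [Real.rpow_natCast, ← inv_pow] at this
    exact this
  rw [h1, h2]

lemma Lcoef_one {q η : ℝ} (hq0 : 0 < q) (hq1 : q < 1) (hη : -1 < η) : Lcoef q η 1 = 1 := by
  unfold Lcoef
  rw [Nat.cast_one]
  exact div_self (symQ_pos hq0 hq1 (by linarith)).ne'

lemma Lcoef_pos {q η : ℝ} (hq0 : 0 < q) (hq1 : q < 1) (hη : -1 < η) {n : ℕ} (hn : 1 ≤ n) :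
    0 < Lcoef q η n := by
  have : (1 : ℝ) ≤ n := by exact_mod_cast hn
  exact div_pos (symQ_pos hq0 hq1 (by linarith)) (symQ_pos hq0 hq1 (by linarith))

lemma Lcoef_le {q η : ℝ} (hq0 : 0 < q) (hq1 : q < 1) (hη : -1 < η) {n : ℕ} (hn : 1 ≤ n) :
    Lcoef q η n ≤ 1 := by
  have : (1 : ℝ) ≤ n := by exact_mod_cast hn
  exact (div_le_one (symQ_pos hq0 hq1 (by linarith))).2 (symQ_mono hq0 hq1 (by linarith))

lemma Jop_T2 {q η : ℝ} (hq0 : 0 < q) (hq1 : q < 1) (hη : -1 < η) {h : ℂ → ℂ}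
    (ha : AnalyticAt ℂ h 0) (h0 : h 0 = 0) :
    T2 (fun z => Jop q η h z / z) (taylorCoeff h 1) (Lcoef q η 2 * taylorCoeff h 2)
      (Lcoef q η 3 * taylorCoeff h 3) := by
  have hp : HasFPowerSeriesAt h (FormalMultilinearSeries.ofScalars ℂ (taylorCoeff h)) 0 :=
    ha.hasFPowerSeriesAt
  have t0 : taylorCoeff h 0 = 0 := by simp [taylorCoeff, h0]
  obtain ⟨r, hr0, hr⟩ := ENNReal.lt_iff_exists_nnreal_btwn.1 hp.radius_pos
  obtain ⟨C, hC0, hC⟩ := FormalMultilinearSeries.norm_mul_pow_le_of_lt_radius _ hr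
  simp only [FormalMultilinearSeries.ofScalars_norm] at hC
  have hr0' : (0 : ℝ) < r := by exact_mod_cast hr0
  have hJ : HasFPowerSeriesAt (Jop q η h)
      (FormalMultilinearSeries.ofScalars ℂ fun n => (Lcoef q η n : ℂ) * taylorCoeff h n) 0 := by
    refine ps_of_bound (r := r) (C := C) hr0' (fun n => ?_) (Eventually.of_forall fun z => rfl)
    rcases Nat.eq_zero_or_pos n with rfl | hn
    · simp [t0, hC0.le]
    · refine le_trans ?_ (hC n)
      have hL : ‖(Lcoef q η n : ℂ)‖ ≤ 1 := by
        rw [Complex.norm_real, Real.norm_of_nonneg (Lcoef_pos hq0 hq1 hη hn).le]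
        exact Lcoef_le hq0 hq1 hη hn
      rw [norm_mul]
      gcongr
      exact mul_le_of_le_one_left (norm_nonneg _) hL
  have hJ0 : Jop q η h 0 = 0 := by
    have e : _ = Jop q η h 0 := hJ.coeff_zero 1
    rw [← e]
    change (FormalMultilinearSeries.ofScalars ℂ _).coeff 0 = 0
    simp [t0]
  have := (hJ.T2div hJ0).2
  simp only [FormalMultilinearSeries.coeff_ofScalars] at this
  exact this.cast (by rw [Lcoef_one hq0 hq1 hη]; simp) rfl rfl

lemma Dq_T2 {q : ℝ} (hq0 : 0 < q) (hq1 : q < 1) {H : ℂ → ℂ} {a b c : ℂ}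
    (h : T2 (fun z => H z / z) a b c) : T2 (Dq q H) a (symQ q 2 * b) (symQ q 3 * c) := by
  have hq : (q : ℂ) ≠ 0 := by exact_mod_cast hq0.ne'
  have hd : (q : ℂ) - (q : ℂ)⁻¹ ≠ 0 := by exact_mod_cast (qsub hq0 hq1).ne
  have s2 : (symQ q 2 : ℂ) = ((q : ℂ) ^ 2 - (q : ℂ)⁻¹ ^ 2) / ((q : ℂ) - (q : ℂ)⁻¹) := by
    have := symQ_nat (q := q) 2 hq0
    push_cast at this; rw [this]; push_cast; rfl
  have s3 : (symQ q 3 : ℂ) = ((q : ℂ) ^ 3 - (q : ℂ)⁻¹ ^ 3) / ((q : ℂ) - (q : ℂ)⁻¹) := by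
    have := symQ_nat (q := q) 3 hq0
    push_cast at this; rw [this]; push_cast; rfl
  have h1 := ((h.scale (q : ℂ) hq).smul ((q : ℂ) / ((q : ℂ) - (q : ℂ)⁻¹))).add
    ((h.scale (q : ℂ)⁻¹ (inv_ne_zero hq)).smul (-(q : ℂ)⁻¹ / ((q : ℂ) - (q : ℂ)⁻¹)))
  have h2 := h1.congr (G := Dq q H) (by
    filter_upwards [nz] with z hz
    simp only [Dq, hz, if_false]
    rw [show z / (q : ℂ) = (q : ℂ)⁻¹ * z by ring]
    generalize H ((q : ℂ) * z) = x
    generalize H ((q : ℂ)⁻¹ * z) = y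
    generalize hD : (q : ℂ) - (q : ℂ)⁻¹ = D at hd
    field_simp
    ring)
  refine h2.cast ?_ ?_ ?_
  · rw [← add_mul, ← add_div, ← sub_eq_add_neg, div_self hd, one_mul]
  · rw [s2]; ring
  · rw [s3]; ring

lemma Phi_T2 {q η : ℝ} (hq0 : 0 < q) (hq1 : q < 1) (lam mu : ℝ) {h : ℂ → ℂ} {A B : ℂ}
    (hJ : T2 (fun z => Jop q η h z / z) 1 A B) :
    T2 (Phi q η lam mu h) 1 (lam * symQ q 2 * M2v q mu * A)
      ((lam * symQ q 3 - 1) * M3v q mu * B +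
        lam * (lam * M2v q mu ^ 2 - N2v q mu) * symQ q 2 ^ 2 * A ^ 2 / 2) := by
  have hK : T2 (fun z => (fun ζ => Jop q η h ζ - Jop q η h (-ζ)) z / z) 2 0 (2 * B) := by
    refine ((hJ.add (hJ.scale (-1) (by norm_num))).congr ?_).cast (by norm_num) (by ring) (by ring)
    filter_upwards [nz] with z hz
    simp only [neg_mul, one_mul]
    field_simp
    ring
  have hD := Dq_T2 hq0 hq1 hJ
  have hD2 : T2 (Dq q (fun ζ => ζ * Dq q (Jop q η h) ζ)) _ _ _ :=
    Dq_T2 hq0 hq1 (hD.congr (by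
      filter_upwards [nz] with z hz
      field_simp))
  have hD3 := Dq_T2 hq0 hq1 hK
  have P1 := (X2_cpow lam).comp hD
  have P2 := (X2_cpow lam).comp hD2
  have i1 := X2_inv.comp ((hK.smul (1 / 2)).cast (by norm_num : _ = (1 : ℂ)) rfl rfl)
  have i2 := X2_inv.comp ((hD3.smul (1 / 2)).cast (by norm_num : _ = (1 : ℂ)) rfl rfl)
  have F1 := (P1.mul i1).congr (G := fun z => 2 * z * Dq q (Jop q η h) z ^ (lam : ℂ) / (Jop q η h z - Jop q η h (-z))) (by
    filter_upwards [nz] with z hz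
    rw [one_div, mul_inv, inv_inv, inv_div]
    ring)
  have F2 := (P2.mul i2).congr (G := fun z => 2 * Dq q (fun ζ => ζ * Dq q (Jop q η h) ζ) z ^ (lam : ℂ) /
        Dq q (fun ζ => Jop q η h ζ - Jop q η h (-ζ)) z) (by
    refine Eventually.of_forall fun z => ?_
    rw [one_div, mul_inv, inv_inv]
    ring)
  have G1 := (X2_cpow mu).comp (F1.cast (by norm_num : _ = (1 : ℂ)) rfl rfl)
  have G2 := (X2_cpow ((1 - mu : ℝ) : ℂ)).comp (F2.cast (by norm_num : _ = (1 : ℂ)) rfl rfl)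
  refine (G1.mul G2).cast (by norm_num) ?_ ?_
  · simp only [M2v]; push_cast; ring
  · simp only [M2v, M3v, N2v]; push_cast; ring

lemma schwarz_T2 {u φ : ℂ → ℂ} {E c : ℕ → ℂ} (hu : IsSchwarz u)
    (hφ : X2 φ 0 1 (E 1) (E 2)) (hc0 : c 0 = 1)
    (hc : ∀ z ∈ ball (0 : ℂ) 1, (1 + u z) / (1 - u z) = ∑' n, c n * z ^ n) :
    T2 (fun z => φ (u z)) 1 (E 1 * c 1 / 2) (E 1 * (c 2 / 2 - c 1 ^ 2 / 4) + E 2 * c 1 ^ 2 / 4) := by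
  obtain ⟨ha, h0, hb⟩ := hu
  have hne : ∀ z ∈ ball (0 : ℂ) 1, 1 - u z ≠ 0 ∧ 1 + u z ≠ 0 := by
    intro z hz
    have := hb z hz
    rw [mem_ball_zero_iff] at this
    constructor
    · intro h
      rw [← sub_eq_zero.1 h] at this
      simp at this
    · intro h
      rw [← neg_eq_of_add_eq_zero_right h] at this
      simp at this
  have hhalf : (1 / 2 : ℂ) ∈ ball (0 : ℂ) 1 := by simp; norm_num
  have hP := (ps_of_ne hc (div_ne_zero (hne _ hhalf).2 (hne _ hhalf).1)).X2.T2
  have hU := (ha 0 (by simp)).hasFPowerSeriesAt.X2.T2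
  simp only [FormalMultilinearSeries.coeff_ofScalars, iteratedDeriv_zero, h0, hc0] at hP hU
  generalize iteratedDeriv 1 u 0 / ((Nat.factorial 1 : ℕ) : ℂ) = u1 at hU
  generalize iteratedDeriv 2 u 0 / ((Nat.factorial 2 : ℕ) : ℂ) = u2 at hU
  have hU := hU.cast (by simp : _ = (0 : ℂ)) rfl rfl
  have e1 := (T2.const 1).add hU
  have e2 := hP.mul ((T2.const 1).add (hU.smul (-1)))
  have e3 := e1.congr (G := fun z => (1 + u z) / (1 - u z) * (1 + -1 * u z)) (by
    filter_upwards [nhdsWithin_le_nhds (ball_mem_nhds (0 : ℂ) one_pos)] with z hz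
    have := (hne z hz).1
    rw [show 1 + -1 * u z = 1 - u z by ring]
    field_simp)
  obtain ⟨-, q1, q2⟩ := e3.unique e2
  have r1 : u1 = c 1 / 2 := by linear_combination q1 / 2
  have r2 : u2 = c 2 / 2 - c 1 ^ 2 / 4 := by
    rw [r1] at q2
    linear_combination q2 / 2
  refine (hφ.comp hU).cast rfl ?_ ?_
  · rw [r1]; ring
  · rw [r1, r2]; ring

theorem fekete_szego_identity_bernardi
    (q : ℝ) (hq0 : 0 < q) (hq1 : q < 1)
    (f g : ℂ → ℂ) (a : ℕ → ℂ)
    (hf : AnalyticOnNhd ℂ f (ball 0 1)) (hf0 : f 0 = 0) (hf'0 : deriv f 0 = 1)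
    (hfa : ∀ z ∈ ball (0 : ℂ) 1, f z = ∑' n, a n * z ^ n)
    (ha0 : a 0 = 0) (ha1 : a 1 = 1)
    (hfinj : InjOn f (ball 0 1))
    (hg : AnalyticOnNhd ℂ g (ball 0 1)) (hg0 : g 0 = 0)
    (hginj : InjOn g (ball 0 1))
    (hgf : ∀ᶠ z in nhds (0 : ℂ), g (f z) = z)
    (φ : ℂ → ℂ) (E : ℕ → ℂ) (E1 : ℝ)
    (hφa : AnalyticOnNhd ℂ φ (ball 0 1)) (hφ0 : φ 0 = 1)
    (hφre : ∀ z ∈ ball (0 : ℂ) 1, 0 < (φ z).re)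
    (hφE : ∀ z ∈ ball (0 : ℂ) 1, φ z = ∑' n, E n * z ^ n)
    (hE0 : E 0 = 1) (hE1 : E 1 = (E1 : ℂ)) (hE1pos : 0 < E1)
    (lam : ℝ) (hlam : 1 ≤ lam)
    (η : ℝ) (hη : -1 < η)
    (mu : ℝ) (hmu : 0 ≤ mu)
    (hM3 : M3v q mu ≠ 0) (hΘ : Thetav q η lam mu E1 E ≠ 0)
    (u v : ℂ → ℂ) (hu : IsSchwarz u) (hv : IsSchwarz v)
    (hsubf : ∀ z ∈ ball (0 : ℂ) 1, z ≠ 0 → Phi q η lam mu f z = φ (u z))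
    (hsubg : ∀ w ∈ ball (0 : ℂ) 1, w ≠ 0 → Phi q η lam mu g w = φ (v w))
    (c d : ℕ → ℂ) (hc0 : c 0 = 1) (hd0 : d 0 = 1)
    (hc : ∀ z ∈ ball (0 : ℂ) 1, (1 + u z) / (1 - u z) = ∑' n, c n * z ^ n)
    (hd : ∀ w ∈ ball (0 : ℂ) 1, (1 + v w) / (1 - v w) = ∑' n, d n * w ^ n)
    (ρ : ℝ) :
    a 3 - (ρ : ℂ) * a 2 ^ 2 =
      (E1 : ℂ) *
          ((((2 * (1 - ρ) * E1 ^ 2 * (lam * symQ q 3 - 1) * M3v q mu * Lcoef q η 3 : ℝ) : ℂ) +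
                Thetav q η lam mu E1 E) * c 2 +
            (((2 * (1 - ρ) * E1 ^ 2 * (lam * symQ q 3 - 1) * M3v q mu * Lcoef q η 3 : ℝ) : ℂ) -
                Thetav q η lam mu E1 E) * d 2) /
        (4 * ((lam : ℂ) * (symQ q 3 : ℂ) - 1) * (M3v q mu : ℂ) * (Lcoef q η 3 : ℂ) *
          Thetav q η lam mu E1 E) := by
  have hfne : f (1 / 2) ≠ 0 := by
    intro h
    have := hfinj (by simp; norm_num : (1 / 2 : ℂ) ∈ ball (0 : ℂ) 1) (by simp : (0 : ℂ) ∈ ball (0 : ℂ) 1)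
      (by rw [h, hf0])
    norm_num at this
  have hhalf : (1 / 2 : ℂ) ∈ ball (0 : ℂ) 1 := by simp; norm_num
  have hfp := ps_of_ne hfa hfne
  have hfA : AnalyticAt ℂ f 0 := hf 0 (by simp)
  have hgA : AnalyticAt ℂ g 0 := hg 0 (by simp)
  have htc : ∀ n, taylorCoeff f n = a n := by
    intro n
    have := congrArg (fun p => FormalMultilinearSeries.coeff p n)
      (hfA.hasFPowerSeriesAt.eq_formalMultilinearSeries hfp)
    simpa only [FormalMultilinearSeries.coeff_ofScalars, taylorCoeff] using this
  have hgp : HasFPowerSeriesAt g (FormalMultilinearSeries.ofScalars ℂ (taylorCoeff g)) 0 :=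
    hgA.hasFPowerSeriesAt
  -- coefficients of the inverse
  have hfd := (hfp.T2div hf0).2
  have hf2 := hfp.X2.T2
  have hgd := (hgp.T2div hg0).1
  simp only [FormalMultilinearSeries.coeff_ofScalars, ha0, ha1] at hfd hf2 hgd
  have hcomp := (hgd.comp hf2).mul hfd
  have hone := (T2.const 1).congr (G := fun z => dslope g 0 (f z) * (f z / z)) (by
    filter_upwards [nz, nhdsWithin_le_nhds hgf] with z hz h
    have := sub_smul_dslope g 0 (f z)
    simp only [smul_eq_mul, sub_zero, hg0, h] at this
    rw [← mul_div_assoc, mul_comm, this, div_self hz])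
  obtain ⟨b1, b2, b3⟩ := hcomp.unique hone
  have hb1 : taylorCoeff g 1 = 1 := by linear_combination b1
  rw [hb1] at b2 b3
  have hb2 : taylorCoeff g 2 = -a 2 := by linear_combination b2
  rw [hb2] at b3
  have hb3 : taylorCoeff g 3 = 2 * a 2 ^ 2 - a 3 := by linear_combination b3
  -- expansions
  have hφne : φ (1 / 2) ≠ 0 := by
    intro h
    have := hφre _ hhalf
    rw [h] at this
    simp at this
  have hφX := (ps_of_ne hφE hφne).X2
  simp only [FormalMultilinearSeries.coeff_ofScalars, hE0] at hφX
  have hb : ∀ᶠ z in 𝓝[≠] (0 : ℂ), z ∈ ball (0 : ℂ) 1 :=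
    nhdsWithin_le_nhds (ball_mem_nhds (0 : ℂ) one_pos)
  have Jf := Jop_T2 (η := η) hq0 hq1 hη hfA hf0
  have Jg := Jop_T2 (η := η) hq0 hq1 hη hgA hg0
  rw [htc, htc, htc, ha1] at Jf
  rw [hb1, hb2, hb3] at Jg
  have Sf := (schwarz_T2 hu hφX hc0 hc).congr (G := Phi q η lam mu f) (by
    filter_upwards [nz, hb] with z hz h using hsubf z h hz)
  have Sg := (schwarz_T2 hv hφX hd0 hd).congr (G := Phi q η lam mu g) (by
    filter_upwards [nz, hb] with z hz h using hsubg z h hz)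
  obtain ⟨-, f1, f2⟩ := (Phi_T2 hq0 hq1 lam mu Jf).unique Sf
  obtain ⟨-, g1, g2⟩ := (Phi_T2 hq0 hq1 lam mu Jg).unique Sg
  -- algebra
  have hL3 : (Lcoef q η 3 : ℂ) ≠ 0 := by
    exact_mod_cast (Lcoef_pos hq0 hq1 hη (by norm_num : 1 ≤ 3)).ne'
  have hM : (M3v q mu : ℂ) ≠ 0 := by exact_mod_cast hM3
  have hs3 : 1 < symQ q 3 := by
    have := symQ_nat (q := q) 3 hq0
    push_cast at this
    rw [this, lt_div_iff_of_neg (qsub hq0 hq1)]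
    have hq := (one_lt_inv₀ hq0).2 hq1
    have h1 : q ^ 3 < q := by nlinarith [mul_pos hq0 hq0]
    nlinarith [mul_pos (sub_pos.2 hq) (sub_pos.2 hq)]
  have hK : ((lam : ℂ) * (symQ q 3 : ℂ) - 1) ≠ 0 := by
    have : lam * symQ q 3 - 1 ≠ 0 := by nlinarith
    exact_mod_cast this
  have hE : (E1 : ℂ) ≠ 0 := by exact_mod_cast hE1pos.ne'
  have hΘd : Thetav q η lam mu E1 E = 2 * ((lam : ℂ) * symQ q 3 - 1) * M3v q mu * E1 ^ 2 * Lcoef q η 3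
      + lam * (lam * M2v q mu ^ 2 * (E1 ^ 2 + 2 * E1 - 2 * E 2) - N2v q mu * E1 ^ 2) *
        (symQ q 2 ^ 2 * Lcoef q η 2 ^ 2) := by
    simp only [Thetav]; push_cast; ring
  rw [hE1] at f1 f2 g1 g2
  push_cast
  generalize Thetav q η lam mu E1 E = Θ at *
  generalize (symQ q 3 : ℂ) = s3 at *
  generalize (symQ q 2 : ℂ) = s2 at *
  generalize (M2v q mu : ℂ) = M2 at *
  generalize (M3v q mu : ℂ) = M3 at *
  generalize (N2v q mu : ℂ) = N2 at *
  generalize (Lcoef q η 2 : ℂ) = L2 at *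
  generalize (Lcoef q η 3 : ℂ) = L3 at *
  generalize (E1 : ℂ) = e at *
  generalize (lam : ℂ) = l at *
  have hcd : d 1 = -c 1 := by
    apply mul_left_cancel₀ hE
    linear_combination -2 * g1 - 2 * f1
  rw [hcd] at g2
  have hc1 : e * c 1 = 2 * (l * s2 * M2 * (L2 * a 2)) := by linear_combination -2 * f1
  have hdiff : 4 * (l * s3 - 1) * M3 * L3 * (a 3 - a 2 ^ 2) = e * (c 2 - d 2) := by
    linear_combination 2 * f2 - 2 * g2
  have hsum : 2 * Θ * a 2 ^ 2 = e ^ 3 * (c 2 + d 2) := by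
    rw [hΘd]
    linear_combination 2 * e ^ 2 * (f2 + g2) - (e - E 2) * (e * c 1 + 2 * (l * s2 * M2 * (L2 * a 2))) * hc1
  rw [eq_div_iff (by simp [hK, hM, hL3, hΘ])]
  linear_combination Θ * hdiff + 2 * (1 - (ρ : ℂ)) * (l * s3 - 1) * M3 * L3 * hsum
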